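/- Assume in addition that the supremum m of ∂_σ²R is attained at (σ₀,α₀), is attained only at the points (σ₀, α₀ + 2kπ), k ∈ ℤ, and that the Hessian matrix of ∂_σ²R at (σ₀,α₀) is negative definite. Let G be the unique C² solution on ℝ × ℝ × [0, 1/m) of ∂_τ G = (1/2)(∂_σ G)² with G(·,·,0) = R. Then for every τ ∈ (0, 1/m): sup_{(σ,α)} ∂_σ²G(σ,α,τ) = m/(1 − τm), equivalently (sup_{(σ,α)} ∂_σ²G(σ,α,τ))^{−1} = 1/m − τ; this supremum is attained exactly at the points (σ₀ − τ·∂_σR(σ₀,α₀), α₀ + 2kπ), k ∈ ℤ; and the Hessian of (σ,α) ↦ ∂_σ²G(σ,α,τ) at these points is negative definite. -/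

import Mathlib

noncomputable section

/-- Partial derivative in coordinate `i` (0 = σ, 1 = α, 2 = τ) of a function on `ℝ × ℝ × ℝ`. -/
def pd (i : Fin 3) (f : ℝ × ℝ × ℝ → ℝ) (p : ℝ × ℝ × ℝ) : ℝ :=
  if i = 0 then deriv (fun s => f (s, p.2.1, p.2.2)) p.1
  else if i = 1 then deriv (fun s => f (p.1, s, p.2.2)) p.2.1
  else deriv (fun s => f (p.1, p.2.1, s)) p.2.2

/-- `∂_σ² R (σ, α)`. -/
def d2R (R : ℝ → ℝ → ℝ) (σ α : ℝ) : ℝ := iteratedDeriv 2 (fun σ' => R σ' α) σ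

/-- `m = sup ∂_σ² R`. -/
def mOf (R : ℝ → ℝ → ℝ) : ℝ := sSup (Set.range fun p : ℝ × ℝ => d2R R p.1 p.2)

/-- The domain `ℝ × ℝ × [0, 1/m)`. -/
def burgersDom (R : ℝ → ℝ → ℝ) : Set (ℝ × ℝ × ℝ) :=
  {p | 0 ≤ p.2.2 ∧ p.2.2 < (mOf R)⁻¹}

/-- `G` is a `C²` solution of `∂_τ G = ½ (∂_σ G)²` on `ℝ × ℝ × [0, 1/m)` with `G(·,·,0) = R`.
(Smoothness is required on `{τ < 1/m}` so that the displayed derivatives are honest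
one-sided derivatives on the closed side `τ = 0`; by Seeley extension this is
equivalent to being `C²` on `ℝ × ℝ × [0, 1/m)`.) -/
structure IsBurgersSol (R : ℝ → ℝ → ℝ) (G : ℝ × ℝ × ℝ → ℝ) : Prop where
  smooth : ContDiffOn ℝ 2 G {p : ℝ × ℝ × ℝ | p.2.2 < (mOf R)⁻¹}
  eqn : ∀ p ∈ burgersDom R, pd 2 G p = (1 / 2) * (pd 0 G p) ^ 2
  init : ∀ σ α : ℝ, G (σ, α, 0) = R σ α

/-- All derivatives of (the uncurried) `R` are bounded. -/
def AllDerivBounded (R : ℝ → ℝ → ℝ) : Prop :=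
  ∀ n : ℕ, ∃ C : ℝ, ∀ p : ℝ × ℝ, ‖iteratedFDeriv ℝ n (fun q : ℝ × ℝ => R q.1 q.2) p‖ ≤ C

/-- The Hessian of `f` at `(σ₀, α₀)` is negative definite (2 × 2 criterion). -/
def NegDefHess (f : ℝ → ℝ → ℝ) (σ₀ α₀ : ℝ) : Prop :=
  iteratedDeriv 2 (fun σ => f σ α₀) σ₀ < 0 ∧
  0 < iteratedDeriv 2 (fun σ => f σ α₀) σ₀ * iteratedDeriv 2 (fun α => f σ₀ α) α₀ -
      (deriv (fun α => deriv (fun σ => f σ α) σ₀) α₀) ^ 2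

/-!
The slope `v = ∂_σG` solves Burgers' equation `∂_τ v = v ∂_σv`, so it is constant along the
characteristics `σ - τ ∂_σR(σ, α)`, and its derivative `w = ∂_σ²G` obeys the Riccati equation
`w' = w ^ 2` along them. Before time `1/m` the characteristics do not cross: they form a `C¹`
family of bijections of the plane, which carries `∂_σ²R` to `∂_σ²G` after composition with the map
`x ↦ x / (1 - τ x)`. This map is increasing with positive derivative, hence the maximum value, the
maximum points and the sign of the Hessian at them are all transported.
-/

open Set Filter Topology

section Calculus

variable {E F G H : Type*} [NormedAddCommGroup E] [NormedSpace ℝ E] [NormedAddCommGroup F]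
  [NormedSpace ℝ F] [NormedAddCommGroup G] [NormedSpace ℝ G]
  [NormedAddCommGroup H] [NormedSpace ℝ H]

lemma contDiff_deriv_left {n : WithTop ℕ∞} {f : ℝ → E → F}
    (hf : ContDiff ℝ (n + 1) fun q : ℝ × E => f q.1 q.2) :
    ContDiff ℝ n fun q : ℝ × E => deriv (fun x => f x q.2) q.1 := by
  have hf' : ContDiff ℝ (n + 1) (Function.uncurry fun (q : ℝ × E) (x : ℝ) => f x q.2) :=
    hf.comp (contDiff_snd.prodMk (contDiff_snd.comp contDiff_fst))
  exact (hf'.fderiv contDiff_fst le_rfl).clm_apply contDiff_const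

lemma hasDerivAt_left_of_hasFDerivAt {f : ℝ × E → F} {f' : ℝ × E →L[ℝ] F} {x : ℝ} {y : E}
    (hf : HasFDerivAt f f' (x, y)) : HasDerivAt (fun s => f (s, y)) (f' (1, 0)) x :=
  HasFDerivAt.comp_hasDerivAt (f := fun s => (s, y)) x hf
    ((hasDerivAt_id x).prodMk (hasDerivAt_const x y))

lemma hasDerivAt_right_of_hasFDerivAt {f : E × ℝ → F} {f' : E × ℝ →L[ℝ] F} {x : E} {y : ℝ}
    (hf : HasFDerivAt f f' (x, y)) : HasDerivAt (fun s => f (x, s)) (f' (0, 1)) y :=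
  HasFDerivAt.comp_hasDerivAt (f := fun s => (x, s)) y hf
    ((hasDerivAt_const y x).prodMk (hasDerivAt_id y))

lemma hasFDerivAt_clm_apply_const {c : E → F →L[ℝ] G} {c' : E →L[ℝ] F →L[ℝ] G} {x : E}
    (hc : HasFDerivAt c c' x) (v : F) : HasFDerivAt (fun y => c y v) (c'.flip v) x := by
  simpa using hc.clm_apply (hasFDerivAt_const v x)

lemma hasFDerivAt_bilin_of_eq_zero (M : F →L[ℝ] G →L[ℝ] H) {c : E → F} {c' : E →L[ℝ] F}
    {d : E → G} {x : E} (hc : HasFDerivAt c c' x) (hcx : c x = 0) (hd : ContinuousAt d x) :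
    HasFDerivAt (fun y => M (c y) (d y)) ((M.flip (d x)).comp c') x := by
  have hmain : HasFDerivAt (fun y => M (c y) (d x)) ((M.flip (d x)).comp c') x :=
    (M.flip (d x)).hasFDerivAt.comp x hc
  have hsmall : (fun y => M (c y) (d y - d x)) =o[𝓝 x] fun y => y - x := by
    have hcO : c =O[𝓝 x] fun y => y - x := by simpa [hcx] using hc.isBigO_sub
    have hdo : (fun y => d y - d x) =o[𝓝 x] fun _ => (1 : ℝ) :=
      (Asymptotics.isLittleO_one_iff ℝ).2 (tendsto_sub_nhds_zero_iff.2 hd)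
    have hbound : (fun y => M (c y) (d y - d x)) =O[𝓝 x] fun y => ‖c y‖ * ‖d y - d x‖ :=
      .of_bound ‖M‖ (.of_forall fun y => by
        simpa only [norm_mul, norm_norm, mul_assoc] using M.le_opNorm₂ (c y) (d y - d x))
    simpa using hbound.trans_isLittleO (hcO.norm_norm.mul_isLittleO hdo.norm_left)
  refine .of_isLittleO ?_
  refine (hmain.isLittleO.add hsmall).congr_left fun y => ?_
  simp [hcx]

lemma injective_fderiv_of_leftInverse {f : E → F} {g : F → E} {x : E}
    (hgf : Function.LeftInverse g f) (hf : DifferentiableAt ℝ f x)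
    (hg : DifferentiableAt ℝ g (f x)) : Function.Injective (fderiv ℝ f x) := by
  have hcomp : (fderiv ℝ g (f x)).comp (fderiv ℝ f x) = .id ℝ E := by
    rw [← fderiv_comp x hg hf, hgf.comp_eq_id, fderiv_id]
  exact Function.LeftInverse.injective fun v => DFunLike.congr_fun hcomp v

end Calculus

section Hessian

variable {E F : Type*} [NormedAddCommGroup E] [NormedSpace ℝ E] [NormedAddCommGroup F]
  [NormedSpace ℝ F]

/-- `f` is differentiable near `x` and its derivative is differentiable at `x`, with the bilinear
form `B` as second derivative. Only pointwise second-order differentiability is asked for, so that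
the notion is stable under `C¹` changes of variables at critical points: there the product rule for
`fderiv f (g y) ∘ fderiv g y` needs only continuity of the second factor. -/
structure HasHessianAt (f : E → ℝ) (B : E →L[ℝ] E →L[ℝ] ℝ) (x : E) : Prop where
  eventually_differentiableAt : ∀ᶠ y in 𝓝 x, DifferentiableAt ℝ f y
  hasFDerivAt_fderiv : HasFDerivAt (fderiv ℝ f) B x

namespace HasHessianAt

lemma of_contDiffAt {f : E → ℝ} {x : E} (hf : ContDiffAt ℝ 2 f x) :
    HasHessianAt f (fderiv ℝ (fderiv ℝ f) x) x where
  eventually_differentiableAt :=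
    (hf.eventually (by simp)).mono fun _ hy => hy.differentiableAt (by simp)
  hasFDerivAt_fderiv :=
    ((hf.fderiv_right (m := 1) (by norm_num)).differentiableAt (by simp)).hasFDerivAt

lemma continuousAt {f : E → ℝ} {B : E →L[ℝ] E →L[ℝ] ℝ} {x : E} (hf : HasHessianAt f B x) :
    ContinuousAt f x :=
  hf.eventually_differentiableAt.self_of_nhds.continuousAt

lemma apply_comm {f : E → ℝ} {B : E →L[ℝ] E →L[ℝ] ℝ} {x : E} (hf : HasHessianAt f B x) (v w : E) :
    B v w = B w v :=
  second_derivative_symmetric_of_eventually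
    (hf.eventually_differentiableAt.mono fun _ hy => hy.hasFDerivAt) hf.hasFDerivAt_fderiv v w

lemma comp_of_fderiv_eq_zero {f : F → ℝ} {B : F →L[ℝ] F →L[ℝ] ℝ} {g : E → F} {x : E}
    (hf : HasHessianAt f B (g x)) (hcrit : fderiv ℝ f (g x) = 0) (hg : ContDiffAt ℝ 1 g x) :
    HasHessianAt (f ∘ g) (B.bilinearComp (fderiv ℝ g x) (fderiv ℝ g x)) x := by
  have hg_diff : ∀ᶠ y in 𝓝 x, DifferentiableAt ℝ g y :=
    (hg.eventually (by simp)).mono fun _ hy => hy.differentiableAt (by simp)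
  have hf_diff : ∀ᶠ y in 𝓝 x, DifferentiableAt ℝ f (g y) :=
    hg.continuousAt.eventually hf.eventually_differentiableAt
  have hchain : fderiv ℝ (f ∘ g) =ᶠ[𝓝 x] fun y => (fderiv ℝ f (g y)).comp (fderiv ℝ g y) := by
    filter_upwards [hf_diff, hg_diff] with y hfy hgy using fderiv_comp y hfy hgy
  refine ⟨?_, ?_⟩
  · filter_upwards [hf_diff, hg_diff] with y hfy hgy using hfy.comp y hgy
  · exact (hasFDerivAt_bilin_of_eq_zero (.compL ℝ E F ℝ)
      (hf.hasFDerivAt_fderiv.comp x (hg.differentiableAt (by simp)).hasFDerivAt) hcrit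
      (hg.continuousAt_fderiv (by simp))).congr_of_eventuallyEq hchain

lemma real_comp_of_fderiv_eq_zero {f : E → ℝ} {B : E →L[ℝ] E →L[ℝ] ℝ} {φ : ℝ → ℝ} {x : E}
    (hf : HasHessianAt f B x) (hcrit : fderiv ℝ f x = 0) (hφ : ContDiffAt ℝ 1 φ (f x)) :
    HasHessianAt (φ ∘ f) (deriv φ (f x) • B) x := by
  have hφ_diff : ∀ᶠ y in 𝓝 x, DifferentiableAt ℝ φ (f y) :=
    hf.continuousAt.eventually
      ((hφ.eventually (by simp)).mono fun _ hy => hy.differentiableAt (by simp))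
  have hchain : fderiv ℝ (φ ∘ f) =ᶠ[𝓝 x] fun y => deriv φ (f y) • fderiv ℝ f y := by
    filter_upwards [hφ_diff, hf.eventually_differentiableAt] with y hφy hfy
    exact (hφy.hasDerivAt.comp_hasFDerivAt y hfy.hasFDerivAt).fderiv
  have hφ' : ContinuousAt (fun y => deriv φ (f y)) x :=
    ContinuousAt.comp (f := f) ((hφ.continuousAt_fderiv (by simp)).clm_apply continuousAt_const)
      hf.continuousAt
  refine ⟨?_, ?_⟩
  · filter_upwards [hφ_diff, hf.eventually_differentiableAt] with y hφy hfy using hφy.comp y hfy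
  · exact (hasFDerivAt_bilin_of_eq_zero (ContinuousLinearMap.lsmul ℝ ℝ).flip
      hf.hasFDerivAt_fderiv hcrit hφ').congr_of_eventuallyEq hchain

end HasHessianAt

lemma forall_quadratic_neg_iff {a b c : ℝ} :
    (∀ v : ℝ × ℝ, v ≠ 0 → a * v.1 ^ 2 + 2 * b * (v.1 * v.2) + c * v.2 ^ 2 < 0) ↔
      a < 0 ∧ 0 < a * c - b ^ 2 := by
  constructor
  · intro h
    have ha : a < 0 := by simpa using h (1, 0) (by simp)
    refine ⟨ha, ?_⟩
    have hmin := h (-b, a) (by simp [ha.ne])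
    simp only at hmin
    nlinarith
  · rintro ⟨ha, hdet⟩ ⟨x, y⟩ hv
    have hsq : a * (a * x ^ 2 + 2 * b * (x * y) + c * y ^ 2) =
        (a * x + b * y) ^ 2 + (a * c - b ^ 2) * y ^ 2 := by ring
    have hpos : 0 < (a * x + b * y) ^ 2 + (a * c - b ^ 2) * y ^ 2 := by
      rcases eq_or_ne y 0 with rfl | hy
      · have hx : x ≠ 0 := by simpa using hv
        have := ha.ne
        simp only [mul_zero, add_zero]
        positivity
      · positivity
    exact neg_of_mul_pos_right (hsq ▸ hpos) ha.le

lemma negDefHess_iff_of_hasHessianAt {f : ℝ → ℝ → ℝ} {B : ℝ × ℝ →L[ℝ] ℝ × ℝ →L[ℝ] ℝ} {σ α : ℝ}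
    (hf : HasHessianAt (fun q : ℝ × ℝ => f q.1 q.2) B (σ, α)) :
    NegDefHess f σ α ↔
      B (1, 0) (1, 0) < 0 ∧ 0 < B (1, 0) (1, 0) * B (0, 1) (0, 1) - B (0, 1) (1, 0) ^ 2 := by
  set D := fderiv ℝ fun q : ℝ × ℝ => f q.1 q.2
  have hD : ∀ v, HasFDerivAt (fun q => D q v) (B.flip v) (σ, α) :=
    hasFDerivAt_clm_apply_const hf.hasFDerivAt_fderiv
  have hleft : ∀ᶠ q in 𝓝 (σ, α), deriv (fun s => f s q.2) q.1 = D q (1, 0) :=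
    hf.eventually_differentiableAt.mono fun q hq =>
      (hasDerivAt_left_of_hasFDerivAt hq.hasFDerivAt).deriv
  have hright : ∀ᶠ q in 𝓝 (σ, α), deriv (fun a => f q.1 a) q.2 = D q (0, 1) :=
    hf.eventually_differentiableAt.mono fun q hq =>
      (hasDerivAt_right_of_hasFDerivAt hq.hasFDerivAt).deriv
  have hσ : Tendsto (fun s => (s, α)) (𝓝 σ) (𝓝 (σ, α)) :=
    (Continuous.prodMk_left α).tendsto σ
  have hα : Tendsto (fun a => (σ, a)) (𝓝 α) (𝓝 (σ, α)) :=
    (Continuous.prodMk_right σ).tendsto α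
  have hfσ : deriv (fun s => f s α) =ᶠ[𝓝 σ] fun s => D (s, α) (1, 0) := hσ.eventually hleft
  have hfα : deriv (fun a => f σ a) =ᶠ[𝓝 α] fun a => D (σ, a) (0, 1) := hα.eventually hright
  have hfσα : (fun a => deriv (fun s => f s a) σ) =ᶠ[𝓝 α] fun a => D (σ, a) (1, 0) :=
    hα.eventually hleft
  rw [NegDefHess, iteratedDeriv_succ, iteratedDeriv_one, iteratedDeriv_succ, iteratedDeriv_one,
    hfσ.deriv_eq, hfα.deriv_eq, hfσα.deriv_eq,
    (hasDerivAt_left_of_hasFDerivAt (hD (1, 0))).deriv,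
    (hasDerivAt_right_of_hasFDerivAt (hD (0, 1))).deriv,
    (hasDerivAt_right_of_hasFDerivAt (hD (1, 0))).deriv]
  simp only [ContinuousLinearMap.flip_apply]

lemma negDefHess_iff_forall_apply_self_neg {f : ℝ → ℝ → ℝ} {B : ℝ × ℝ →L[ℝ] ℝ × ℝ →L[ℝ] ℝ}
    {σ α : ℝ} (hf : HasHessianAt (fun q : ℝ × ℝ => f q.1 q.2) B (σ, α)) :
    NegDefHess f σ α ↔ ∀ v ≠ 0, B v v < 0 := by
  have hquad : ∀ v : ℝ × ℝ, B v v = B (1, 0) (1, 0) * v.1 ^ 2 +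
      2 * B (0, 1) (1, 0) * (v.1 * v.2) + B (0, 1) (0, 1) * v.2 ^ 2 := by
    rintro ⟨x, y⟩
    have hxy : ((x, y) : ℝ × ℝ) = x • (1, 0) + y • (0, 1) := by simp
    simp only [hxy, map_add, map_smul, add_apply, smul_apply, smul_eq_mul,
      hf.apply_comm (1, 0) (0, 1)]
    ring
  rw [negDefHess_iff_of_hasHessianAt hf, ← forall_quadratic_neg_iff]
  exact forall₂_congr fun v _ => by rw [hquad v]

/-- At a critical point the Hessian of `φ ∘ f ∘ g` is a positive multiple of the Hessian of `f`
transported by the linear map `fderiv ℝ g p`. -/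
lemma negDefHess_of_eq_comp_comp {f F : ℝ → ℝ → ℝ} {φ : ℝ → ℝ} {g : ℝ × ℝ → ℝ × ℝ} {p : ℝ × ℝ}
    {σ α : ℝ} (hgp : g p = (σ, α)) (hf : ContDiffAt ℝ 2 (fun q : ℝ × ℝ => f q.1 q.2) (σ, α))
    (hcrit : fderiv ℝ (fun q : ℝ × ℝ => f q.1 q.2) (σ, α) = 0)
    (hφ : ContDiffAt ℝ 1 φ (f σ α)) (hφ' : 0 < deriv φ (f σ α)) (hg : ContDiffAt ℝ 1 g p)
    (hinj : Function.Injective (fderiv ℝ g p))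
    (hF : ∀ x y, F x y = φ (f (g (x, y)).1 (g (x, y)).2)) (hneg : NegDefHess f σ α) :
    NegDefHess F p.1 p.2 := by
  set u : ℝ × ℝ → ℝ := fun q => f q.1 q.2
  have hu : HasHessianAt u (fderiv ℝ (fderiv ℝ u) (σ, α)) (σ, α) := .of_contDiffAt hf
  have hφu := hu.real_comp_of_fderiv_eq_zero hcrit hφ
  have hφu_crit : fderiv ℝ (φ ∘ u) (σ, α) = 0 := by
    have hchain := (hφ.differentiableAt one_ne_zero).hasDerivAt.comp_hasFDerivAt (σ, α)
      hu.eventually_differentiableAt.self_of_nhds.hasFDerivAt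
    rw [hchain.fderiv, hcrit, smul_zero]
  rw [← hgp] at hφu hφu_crit
  have hcomp := hφu.comp_of_fderiv_eq_zero hφu_crit hg
  have hF_eq : (φ ∘ u) ∘ g = fun q => F q.1 q.2 := funext fun q => (hF q.1 q.2).symm
  rw [hF_eq, hgp] at hcomp
  rw [negDefHess_iff_forall_apply_self_neg hu] at hneg
  refine (negDefHess_iff_forall_apply_self_neg hcomp).2 fun v hv => ?_
  exact mul_neg_of_pos_of_neg hφ' (hneg _ (by simpa using hinj.ne hv))

lemma negDefHess_comp_add_const_right (f : ℝ → ℝ → ℝ) (c σ α : ℝ) :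
    NegDefHess (fun s a => f s (a + c)) σ α ↔ NegDefHess f σ (α + c) := by
  have hσα := deriv_comp_add_const (fun a => deriv (fun s => f s a) σ) c α
  rw [NegDefHess, NegDefHess, hσα, iteratedDeriv_comp_add_const]

end Hessian

section Characteristics

/-- Differentiating `∂_t H = ½ (∂_x H)²` in `x` gives Burgers' equation for `∂_x H`. -/
lemma fderiv_fderiv_of_hamiltonJacobi {H : ℝ × ℝ → ℝ} {x t : ℝ} (hH : ContDiffAt ℝ 2 H (x, t))
    (heq : ∀ᶠ y in 𝓝 x, fderiv ℝ H (y, t) (0, 1) = 1 / 2 * fderiv ℝ H (y, t) (1, 0) ^ 2) :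
    fderiv ℝ (fderiv ℝ H) (x, t) (0, 1) (1, 0) =
      fderiv ℝ H (x, t) (1, 0) * fderiv ℝ (fderiv ℝ H) (x, t) (1, 0) (1, 0) := by
  have hHess := HasHessianAt.of_contDiffAt hH
  have hD : ∀ v, HasDerivAt (fun y => fderiv ℝ H (y, t) v)
      (fderiv ℝ (fderiv ℝ H) (x, t) (1, 0) v) x := fun v =>
    hasDerivAt_left_of_hasFDerivAt (hasFDerivAt_clm_apply_const hHess.hasFDerivAt_fderiv v)
  have hrhs := (((hD (1, 0)).pow 2).const_mul (1 / 2 : ℝ)).congr_of_eventuallyEq heq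
  rw [hHess.apply_comm, (hD (0, 1)).unique hrhs]
  ring

/-- With `v = ∂_x H`, the defect `v - v(x, t)` solves a homogeneous linear equation along the line
through `(x, t)` of speed `-v(x, t)`, and it vanishes at time `t`; so Gronwall's inequality applies,
although `v` is not known in advance to be constant along that line. -/
theorem fderiv_backward_characteristic {H : ℝ × ℝ → ℝ} {T : ℝ}
    (hH : ContDiffOn ℝ 2 H {p | p.2 < T})
    (heq : ∀ p : ℝ × ℝ, p.2 ∈ Ico 0 T → fderiv ℝ H p (0, 1) = 1 / 2 * fderiv ℝ H p (1, 0) ^ 2)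
    {t : ℝ} (ht : t ∈ Ico 0 T) (x : ℝ) :
    fderiv ℝ H (x + t * fderiv ℝ H (x, t) (1, 0), 0) (1, 0) = fderiv ℝ H (x, t) (1, 0) := by
  set c := fderiv ℝ H (x, t) (1, 0)
  set γ : ℝ → ℝ × ℝ := fun s => (x + s * c, t - s) with hγ
  have hU : IsOpen {p : ℝ × ℝ | p.2 < T} := isOpen_lt continuous_snd continuous_const
  have hγU : MapsTo γ (Icc 0 t) {p | p.2 < T} := fun s hs =>
    (sub_le_self t hs.1).trans_lt ht.2
  have hHγ : ∀ s ∈ Icc 0 t, ContDiffAt ℝ 2 H (γ s) := fun s hs =>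
    hH.contDiffAt (hU.mem_nhds (hγU hs))
  have hdefect : ∀ s ∈ Icc 0 t, HasDerivAt (fun s => fderiv ℝ H (γ s) (1, 0) - c)
      (-fderiv ℝ (fderiv ℝ H) (γ s) (1, 0) (1, 0) * (fderiv ℝ H (γ s) (1, 0) - c)) s := by
    intro s hs
    have hγ' : HasDerivAt γ (c • (1, 0) - (0, 1)) s := by
      have h := (((hasDerivAt_id s).mul_const c).const_add x).prodMk ((hasDerivAt_id s).const_sub t)
      exact h.congr_deriv (by simp)
    have hburgers := fderiv_fderiv_of_hamiltonJacobi (hHγ s hs)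
      (.of_forall fun y => heq (y, t - s) ⟨sub_nonneg.2 hs.2, hγU hs⟩)
    have hslope := (hasFDerivAt_clm_apply_const
      (HasHessianAt.of_contDiffAt (hHγ s hs)).hasFDerivAt_fderiv (1, 0)).comp_hasDerivAt s hγ'
    refine (hslope.sub_const c).congr_deriv ?_
    rw [ContinuousLinearMap.flip_apply, map_sub, map_smul, sub_apply, smul_apply, hburgers,
      smul_eq_mul]
    ring
  have hcoeff : ContinuousOn (fun s => fderiv ℝ (fderiv ℝ H) (γ s) (1, 0) (1, 0)) (Icc 0 t) := by
    have hD2 := (hH.fderiv_of_isOpen hU (m := 1) (by norm_num)).continuousOn_fderiv_of_isOpen hU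
      le_rfl
    have hD2γ := hD2.comp (by fun_prop : ContinuousOn γ (Icc 0 t)) hγU
    exact (hD2γ.clm_apply continuousOn_const).clm_apply continuousOn_const
  obtain ⟨K, hK⟩ := isCompact_Icc.exists_bound_of_continuousOn hcoeff
  have hzero := eq_zero_of_abs_deriv_le_mul_abs_self_of_eq_zero_right
    (HasDerivAt.continuousOn hdefect)
    (fun s hs => (hdefect s (Ico_subset_Icc_self hs)).hasDerivWithinAt)
    (by simp [hγ, c])
    (fun s hs => by
      rw [norm_mul, norm_neg]
      exact mul_le_mul_of_nonneg_right (hK s (Ico_subset_Icc_self hs)) (norm_nonneg _))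
    t (right_mem_Icc.2 ht.1)
  simpa [hγ, sub_eq_zero] using hzero

end Characteristics

section Riccati

/-- The time-`τ` flow of the Riccati equation `x' = x ^ 2`, which `∂_σ²G` obeys along
characteristics. It is meaningful where `τ * x < 1`; at the blow-up `τ * x = 1` the division
returns `0`. -/
def riccatiFlow (τ x : ℝ) : ℝ := x / (1 - τ * x)

lemma hasDerivAt_riccatiFlow {τ x : ℝ} (hx : τ * x ≠ 1) :
    HasDerivAt (riccatiFlow τ) (1 / (1 - τ * x) ^ 2) x := by
  have hden : HasDerivAt (fun x => 1 - τ * x) (-τ) x := by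
    simpa using ((hasDerivAt_id x).const_mul τ).const_sub 1
  refine ((hasDerivAt_id x).div hden (sub_ne_zero.2 hx.symm)).congr_deriv ?_
  simp only [id]
  ring

lemma contDiffAt_riccatiFlow {n : WithTop ℕ∞} {τ x : ℝ} (hx : τ * x ≠ 1) :
    ContDiffAt ℝ n (riccatiFlow τ) x :=
  contDiffAt_id.div (contDiffAt_const.sub (contDiffAt_const.mul contDiffAt_id))
    (sub_ne_zero.2 hx.symm)

lemma strictMonoOn_riccatiFlow (τ : ℝ) : StrictMonoOn (riccatiFlow τ) {x | τ * x < 1} := by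
  intro x hx y hy hxy
  rw [riccatiFlow, riccatiFlow, div_lt_div_iff₀ (sub_pos.2 hx) (sub_pos.2 hy)]
  linarith

end Riccati

section PartialDerivatives

lemma pd_zero (f : ℝ × ℝ × ℝ → ℝ) (σ α τ : ℝ) :
    pd 0 f (σ, α, τ) = deriv (fun s => f (s, α, τ)) σ := by
  simp [pd]

lemma pd_two (f : ℝ × ℝ × ℝ → ℝ) (σ α τ : ℝ) :
    pd 2 f (σ, α, τ) = deriv (fun s => f (σ, α, s)) τ := by
  simp [pd]

lemma d2R_eq_deriv_deriv (R : ℝ → ℝ → ℝ) (σ α : ℝ) :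
    d2R R σ α = deriv (fun s => deriv (fun x => R x α) s) σ := by
  rw [d2R, iteratedDeriv_succ, iteratedDeriv_one]

lemma hasDerivAt_deriv_d2R {R : ℝ → ℝ → ℝ} (hR : ContDiff ℝ 2 fun q : ℝ × ℝ => R q.1 q.2)
    (σ α : ℝ) : HasDerivAt (fun s => deriv (fun x => R x α) s) (d2R R σ α) σ := by
  have hslope : ContDiff ℝ 1 fun q : ℝ × ℝ => deriv (fun s => R s q.2) q.1 :=
    contDiff_deriv_left (by rwa [one_add_one_eq_two])
  rw [d2R_eq_deriv_deriv]
  exact (hasDerivAt_left_of_hasFDerivAt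
    (hslope.differentiable one_ne_zero (σ, α)).hasFDerivAt).differentiableAt.hasDerivAt

lemma contDiff_d2R {n : WithTop ℕ∞} {R : ℝ → ℝ → ℝ}
    (hR : ContDiff ℝ (n + 1 + 1) fun q : ℝ × ℝ => R q.1 q.2) :
    ContDiff ℝ n fun q : ℝ × ℝ => d2R R q.1 q.2 := by
  simp only [d2R_eq_deriv_deriv]
  exact contDiff_deriv_left (f := fun x a => deriv (fun s => R s a) x) (contDiff_deriv_left hR)

end PartialDerivatives

/-- The position at time `τ` of the characteristic issued from `q = (σ, α)` at time `0`; the angle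
`α` is a parameter. -/
def charFlow (R : ℝ → ℝ → ℝ) (τ : ℝ) (q : ℝ × ℝ) : ℝ × ℝ :=
  (q.1 - τ * deriv (fun s => R s q.2) q.1, q.2)

/-- The position at time `0` of the characteristic which passes through `q = (σ, α)` at time `τ`. -/
def charFoot (G : ℝ × ℝ × ℝ → ℝ) (τ : ℝ) (q : ℝ × ℝ) : ℝ × ℝ :=
  (q.1 + τ * pd 0 G (q.1, q.2, τ), q.2)

lemma hasDerivAt_fst_charFlow {R : ℝ → ℝ → ℝ} (hR : ContDiff ℝ 2 fun q : ℝ × ℝ => R q.1 q.2)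
    (τ σ α : ℝ) : HasDerivAt (fun s => (charFlow R τ (s, α)).1) (1 - τ * d2R R σ α) σ :=
  (hasDerivAt_id σ).sub ((hasDerivAt_deriv_d2R hR σ α).const_mul τ)

lemma differentiable_charFlow {R : ℝ → ℝ → ℝ} (hR : ContDiff ℝ 2 fun q : ℝ × ℝ => R q.1 q.2)
    (τ : ℝ) : Differentiable ℝ (charFlow R τ) := by
  have hslope : ContDiff ℝ 1 fun q : ℝ × ℝ => deriv (fun s => R s q.2) q.1 :=
    contDiff_deriv_left (by rwa [one_add_one_eq_two])
  exact (differentiable_fst.sub ((hslope.differentiable one_ne_zero).const_mul τ)).prodMk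
    differentiable_snd

lemma injective_charFlow {R : ℝ → ℝ → ℝ} (hR : ContDiff ℝ 2 fun q : ℝ × ℝ => R q.1 q.2) {τ : ℝ}
    (hτR : ∀ σ α, τ * d2R R σ α < 1) : Function.Injective (charFlow R τ) := by
  rintro ⟨σ, α⟩ ⟨σ', α'⟩ h
  obtain rfl : α = α' := congr_arg Prod.snd h
  have hmono : StrictMono fun s => (charFlow R τ (s, α)).1 := strictMono_of_deriv_pos fun s => by
    rw [(hasDerivAt_fst_charFlow hR τ s α).deriv]
    exact sub_pos.2 (hτR s α)
  rw [hmono.injective (congr_arg Prod.fst h)]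

namespace IsBurgersSol

variable {R : ℝ → ℝ → ℝ} {G : ℝ × ℝ × ℝ → ℝ} {τ : ℝ}

lemma contDiff_pd_zero (hG : IsBurgersSol R G) (hτ : τ < (mOf R)⁻¹) :
    ContDiff ℝ 1 fun q : ℝ × ℝ => pd 0 G (q.1, q.2, τ) := by
  have hslice : ContDiff ℝ 2 fun q : ℝ × ℝ => G (q.1, q.2, τ) :=
    hG.smooth.comp_contDiff (by fun_prop) fun _ => hτ
  rw [← one_add_one_eq_two] at hslice
  simp only [pd_zero]
  exact contDiff_deriv_left (f := fun s a => G (s, a, τ)) hslice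

lemma contDiff_charFoot (hG : IsBurgersSol R G) (hτ : τ < (mOf R)⁻¹) :
    ContDiff ℝ 1 (charFoot G τ) :=
  (contDiff_fst.add (contDiff_const.mul (hG.contDiff_pd_zero hτ))).prodMk contDiff_snd

lemma deriv_apply_charFoot (hG : IsBurgersSol R G) (hτ : τ ∈ Ico 0 (mOf R)⁻¹) (q : ℝ × ℝ) :
    deriv (fun s => R s q.2) (charFoot G τ q).1 = pd 0 G (q.1, q.2, τ) := by
  set H : ℝ × ℝ → ℝ := fun p => G (p.1, q.2, p.2)
  have hH : ContDiffOn ℝ 2 H {p | p.2 < (mOf R)⁻¹} :=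
    hG.smooth.comp (by fun_prop : ContDiff ℝ 2 fun p : ℝ × ℝ => (p.1, q.2, p.2)).contDiffOn
      fun _ hp => hp
  have hH_diff : ∀ p : ℝ × ℝ, p.2 < (mOf R)⁻¹ → HasFDerivAt H (fderiv ℝ H p) p := fun p hp =>
    ((hH.contDiffAt ((isOpen_lt continuous_snd continuous_const).mem_nhds hp)).differentiableAt
      (by simp)).hasFDerivAt
  have hHx : ∀ x t, t < (mOf R)⁻¹ → fderiv ℝ H (x, t) (1, 0) = pd 0 G (x, q.2, t) := by
    intro x t ht
    rw [pd_zero]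
    exact (hasDerivAt_left_of_hasFDerivAt (hH_diff (x, t) ht)).deriv.symm
  have hHt : ∀ x t, t < (mOf R)⁻¹ → fderiv ℝ H (x, t) (0, 1) = pd 2 G (x, q.2, t) := by
    intro x t ht
    rw [pd_two]
    exact (hasDerivAt_right_of_hasFDerivAt (hH_diff (x, t) ht)).deriv.symm
  have hconst := fderiv_backward_characteristic hH (fun p hp => by
    rw [hHx _ _ hp.2, hHt _ _ hp.2]
    exact hG.eqn (p.1, q.2, p.2) hp) hτ q.1
  rw [hHx _ _ hτ.2, hHx _ _ (hτ.1.trans_lt hτ.2), pd_zero] at hconst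
  simp only [hG.init] at hconst
  exact hconst

lemma charFlow_charFoot (hG : IsBurgersSol R G) (hτ : τ ∈ Ico 0 (mOf R)⁻¹) :
    Function.LeftInverse (charFlow R τ) (charFoot G τ) := fun q => by
  refine Prod.ext ?_ rfl
  have hslope : deriv (fun s => R s (charFoot G τ q).2) (charFoot G τ q).1 =
      pd 0 G (q.1, q.2, τ) := hG.deriv_apply_charFoot hτ q
  rw [charFlow, hslope]
  simp [charFoot]

lemma charFoot_charFlow (hG : IsBurgersSol R G) (hR : ContDiff ℝ 2 fun q : ℝ × ℝ => R q.1 q.2)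
    (hτ : τ ∈ Ico 0 (mOf R)⁻¹) (hτR : ∀ σ α, τ * d2R R σ α < 1) :
    Function.LeftInverse (charFoot G τ) (charFlow R τ) :=
  (hG.charFlow_charFoot hτ).rightInverse_of_injective (injective_charFlow hR hτR)

/-- Differentiate the identity `∂_σR ∘ charFoot = ∂_σG(·, ·, τ)` in `σ`, the `σ`-derivative of
`charFoot` being `1 + τ ∂_σ²G`. -/
lemma pd_zero_pd_zero_eq_riccatiFlow (hG : IsBurgersSol R G)
    (hR : ContDiff ℝ 2 fun q : ℝ × ℝ => R q.1 q.2) (hτ : τ ∈ Ico 0 (mOf R)⁻¹)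
    (hτR : ∀ σ α, τ * d2R R σ α < 1) (σ α : ℝ) :
    pd 0 (pd 0 G) (σ, α, τ) = riccatiFlow τ (d2R R (charFoot G τ (σ, α)).1 α) := by
  have hslope : HasDerivAt (fun s => pd 0 G (s, α, τ)) (pd 0 (pd 0 G) (σ, α, τ)) σ := by
    rw [pd_zero (pd 0 G)]
    exact (hasDerivAt_left_of_hasFDerivAt ((hG.contDiff_pd_zero hτ.2).differentiable one_ne_zero
      (σ, α)).hasFDerivAt).differentiableAt.hasDerivAt
  have hfoot : HasDerivAt (fun s => (charFoot G τ (s, α)).1)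
      (1 + τ * pd 0 (pd 0 G) (σ, α, τ)) σ :=
    (hasDerivAt_id σ).add (hslope.const_mul τ)
  have hcomp : HasDerivAt (fun s => deriv (fun x => R x α) (charFoot G τ (s, α)).1)
      (d2R R (charFoot G τ (σ, α)).1 α * (1 + τ * pd 0 (pd 0 G) (σ, α, τ))) σ :=
    HasDerivAt.comp (h₂ := fun x => deriv (fun y => R y α) x) σ (hasDerivAt_deriv_d2R hR _ α) hfoot
  have hlinear := hcomp.unique
    (hslope.congr_of_eventuallyEq (.of_forall fun s => hG.deriv_apply_charFoot hτ (s, α)))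
  rw [riccatiFlow, eq_div_iff (sub_pos.2 (hτR _ α)).ne']
  linear_combination -hlinear

lemma pd_zero_pd_zero_le_riccatiFlow (hG : IsBurgersSol R G)
    (hR : ContDiff ℝ 2 fun q : ℝ × ℝ => R q.1 q.2) (hτ : τ ∈ Ico 0 (mOf R)⁻¹)
    {M : ℝ} (hM : ∀ σ α, d2R R σ α ≤ M) (hτM : τ * M < 1) (σ α : ℝ) :
    pd 0 (pd 0 G) (σ, α, τ) ≤ riccatiFlow τ M := by
  have hτR : ∀ σ α, τ * d2R R σ α < 1 := fun σ α =>
    (mul_le_mul_of_nonneg_left (hM σ α) hτ.1).trans_lt hτM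
  rw [hG.pd_zero_pd_zero_eq_riccatiFlow hR hτ hτR]
  exact (strictMonoOn_riccatiFlow τ).monotoneOn (hτR _ α) hτM (hM _ α)

lemma pd_zero_pd_zero_charFlow (hG : IsBurgersSol R G)
    (hR : ContDiff ℝ 2 fun q : ℝ × ℝ => R q.1 q.2) (hτ : τ ∈ Ico 0 (mOf R)⁻¹)
    (hτR : ∀ σ α, τ * d2R R σ α < 1) (σ α : ℝ) :
    pd 0 (pd 0 G) ((charFlow R τ (σ, α)).1, α, τ) = riccatiFlow τ (d2R R σ α) := by
  have hfoot : charFoot G τ ((charFlow R τ (σ, α)).1, α) = (σ, α) :=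
    hG.charFoot_charFlow hR hτ hτR (σ, α)
  rw [hG.pd_zero_pd_zero_eq_riccatiFlow hR hτ hτR, hfoot]

lemma exists_charFlow_eq_of_pd_zero_pd_zero_eq (hG : IsBurgersSol R G)
    (hR : ContDiff ℝ 2 fun q : ℝ × ℝ => R q.1 q.2) (hτ : τ ∈ Ico 0 (mOf R)⁻¹)
    (hτR : ∀ σ α, τ * d2R R σ α < 1) {M : ℝ} (hτM : τ * M < 1) {σ α : ℝ}
    (h : pd 0 (pd 0 G) (σ, α, τ) = riccatiFlow τ M) :
    ∃ σ', d2R R σ' α = M ∧ (charFlow R τ (σ', α)).1 = σ := by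
  rw [hG.pd_zero_pd_zero_eq_riccatiFlow hR hτ hτR] at h
  exact ⟨(charFoot G τ (σ, α)).1, (strictMonoOn_riccatiFlow τ).injOn (hτR _ α) hτM h,
    congr_arg Prod.fst (hG.charFlow_charFoot hτ (σ, α))⟩

theorem negDefHess_pd_zero_pd_zero (hG : IsBurgersSol R G)
    (hR : ContDiff ℝ 4 fun q : ℝ × ℝ => R q.1 q.2) (hτ : τ ∈ Ico 0 (mOf R)⁻¹)
    (hτR : ∀ σ α, τ * d2R R σ α < 1) {σ α : ℝ}
    (hcrit : fderiv ℝ (fun q : ℝ × ℝ => d2R R q.1 q.2) (σ, α) = 0)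
    (hneg : NegDefHess (d2R R) σ α) :
    NegDefHess (fun σ α => pd 0 (pd 0 G) (σ, α, τ)) (charFlow R τ (σ, α)).1 α := by
  have hR₂ : ContDiff ℝ 2 fun q : ℝ × ℝ => R q.1 q.2 := hR.of_le (by norm_num)
  have hfoot : charFoot G τ (charFlow R τ (σ, α)) = (σ, α) := hG.charFoot_charFlow hR₂ hτ hτR _
  have hsmooth : ContDiff ℝ 1 (charFoot G τ) := hG.contDiff_charFoot hτ.2
  have hinj := injective_fderiv_of_leftInverse (hG.charFlow_charFoot hτ)
    (hsmooth.differentiable one_ne_zero (charFlow R τ (σ, α))) (differentiable_charFlow hR₂ τ _)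
  have hpos : 0 < deriv (riccatiFlow τ) (d2R R σ α) := by
    rw [(hasDerivAt_riccatiFlow (hτR σ α).ne).deriv]
    exact one_div_pos.2 (pow_pos (sub_pos.2 (hτR σ α)) 2)
  exact negDefHess_of_eq_comp_comp (g := charFoot G τ) hfoot
    (contDiff_d2R (hR.of_le (by norm_num))).contDiffAt hcrit
    (contDiffAt_riccatiFlow (hτR σ α).ne) hpos hsmooth.contDiffAt hinj
    (hG.pd_zero_pd_zero_eq_riccatiFlow hR₂ hτ hτR) hneg

end IsBurgersSol

lemma d2R_le_mOf {R : ℝ → ℝ → ℝ} (hbdd : BddAbove (range fun p : ℝ × ℝ => d2R R p.1 p.2))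
    (σ α : ℝ) : d2R R σ α ≤ mOf R :=
  le_csSup hbdd ⟨(σ, α), rfl⟩

lemma mul_mOf_lt_one {R : ℝ → ℝ → ℝ} {τ : ℝ} (hτ : τ ∈ Ico 0 (mOf R)⁻¹) : τ * mOf R < 1 := by
  have hm : 0 < mOf R := inv_pos.1 (hτ.1.trans_lt hτ.2)
  simpa [hm.ne'] using mul_lt_mul_of_pos_right hτ.2 hm

lemma mul_d2R_lt_one {R : ℝ → ℝ → ℝ} {τ : ℝ}
    (hbdd : BddAbove (range fun p : ℝ × ℝ => d2R R p.1 p.2)) (hτ : τ ∈ Ico 0 (mOf R)⁻¹)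
    (σ α : ℝ) : τ * d2R R σ α < 1 :=
  (mul_le_mul_of_nonneg_left (d2R_le_mOf hbdd σ α) hτ.1).trans_lt (mul_mOf_lt_one hτ)

lemma apply_add_mul_int_of_periodic {R : ℝ → ℝ → ℝ} {c : ℝ} (hper : ∀ σ α, R σ (α + c) = R σ α)
    (k : ℤ) (α : ℝ) : (fun σ => R σ (α + c * k)) = fun σ => R σ α := by
  have h : Function.Periodic (fun α σ => R σ α) c := fun α => funext fun σ => hper σ α
  simpa only [mul_comm c] using h.int_mul k α

theorem burgers_max_propagation_general {R : ℝ → ℝ → ℝ} {c : ℝ}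
    (hR : ContDiff ℝ 4 fun q : ℝ × ℝ => R q.1 q.2)
    (hper : ∀ σ α : ℝ, R σ (α + c) = R σ α)
    (hbdd : BddAbove (range fun p : ℝ × ℝ => d2R R p.1 p.2)) {σ₀ α₀ : ℝ}
    (hmax : d2R R σ₀ α₀ = mOf R)
    (honly : ∀ σ α : ℝ, d2R R σ α = mOf R → σ = σ₀ ∧ ∃ k : ℤ, α = α₀ + c * k)
    (hhess : NegDefHess (d2R R) σ₀ α₀) {G : ℝ × ℝ × ℝ → ℝ} (hG : IsBurgersSol R G) {τ : ℝ}
    (hτ : τ ∈ Ico 0 (mOf R)⁻¹) :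
    (sSup (range fun p : ℝ × ℝ => pd 0 (pd 0 G) (p.1, p.2, τ)) = mOf R / (1 - τ * mOf R)) ∧
    (∀ σ α : ℝ, pd 0 (pd 0 G) (σ, α, τ) = mOf R / (1 - τ * mOf R) ↔
      (σ = σ₀ - τ * deriv (fun σ' => R σ' α₀) σ₀ ∧ ∃ k : ℤ, α = α₀ + c * k)) ∧
    (∀ k : ℤ, NegDefHess (fun σ α => pd 0 (pd 0 G) (σ, α, τ))
      (σ₀ - τ * deriv (fun σ' => R σ' α₀) σ₀) (α₀ + c * k)) := by
  have hR₂ : ContDiff ℝ 2 fun q : ℝ × ℝ => R q.1 q.2 := hR.of_le (by norm_num)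
  have hτR := mul_d2R_lt_one hbdd hτ
  have hshift := apply_add_mul_int_of_periodic hper
  have hd2R : ∀ (k : ℤ) (σ α : ℝ), d2R R σ (α + c * k) = d2R R σ α := fun k σ α => by
    rw [d2R, hshift, d2R]
  have hflow : ∀ k : ℤ, (charFlow R τ (σ₀, α₀ + c * k)).1 =
      σ₀ - τ * deriv (fun σ' => R σ' α₀) σ₀ := fun k => by rw [charFlow, hshift]
  have hattained : ∀ k : ℤ, pd 0 (pd 0 G) (σ₀ - τ * deriv (fun σ' => R σ' α₀) σ₀, α₀ + c * k, τ) =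
      riccatiFlow τ (mOf R) := fun k => by
    rw [← hflow k, hG.pd_zero_pd_zero_charFlow hR₂ hτ hτR, hd2R, hmax]
  refine ⟨IsGreatest.csSup_eq ⟨⟨(_, _), hattained 0⟩, ?_⟩, fun σ α => ⟨fun h => ?_, ?_⟩,
    fun k => ?_⟩
  · rintro _ ⟨q, rfl⟩
    exact hG.pd_zero_pd_zero_le_riccatiFlow hR₂ hτ (d2R_le_mOf hbdd) (mul_mOf_lt_one hτ) q.1 q.2
  · obtain ⟨σ', hσ', rfl⟩ := hG.exists_charFlow_eq_of_pd_zero_pd_zero_eq hR₂ hτ hτR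
      (mul_mOf_lt_one hτ) h
    obtain ⟨rfl, k, rfl⟩ := honly σ' α hσ'
    exact ⟨hflow k, k, rfl⟩
  · rintro ⟨rfl, k, rfl⟩
    exact hattained k
  · rw [← hflow k]
    refine hG.negDefHess_pd_zero_pd_zero hR hτ hτR (IsLocalMax.fderiv_eq_zero ?_) ?_
    · exact .of_forall fun q => (d2R_le_mOf hbdd q.1 q.2).trans_eq ((hd2R k σ₀ α₀).trans hmax).symm
    · rw [← negDefHess_comp_add_const_right]
      simpa only [hd2R] using hhess

/-- **Propagation of the nondegenerate maximum under the Burgers flow** (cf. Section III.2.5):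
if `∂_σ²R` has its (positive, quadratic) maximum `m` exactly at the points `(σ₀, α₀ + 2kπ)`,
then for `0 < τ < 1/m` one has `sup ∂_σ²G(·,·,τ) = m/(1 − τm)`, attained exactly at
`(σ₀ − τ ∂_σR(σ₀,α₀), α₀ + 2kπ)`, with negative definite Hessian there. -/
theorem burgers_max_propagation (R : ℝ → ℝ → ℝ)
    (hsm : ContDiff ℝ (⊤ : ℕ∞) (fun q : ℝ × ℝ => R q.1 q.2))
    (hper : ∀ σ α : ℝ, R σ (α + 2 * Real.pi) = R σ α)
    (hbd : AllDerivBounded R)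
    (hbdd : BddAbove (Set.range fun p : ℝ × ℝ => d2R R p.1 p.2))
    (hm : 0 < mOf R) (σ₀ α₀ : ℝ)
    (hmax : d2R R σ₀ α₀ = mOf R)
    (honly : ∀ σ α : ℝ, d2R R σ α = mOf R → σ = σ₀ ∧ ∃ k : ℤ, α = α₀ + 2 * Real.pi * k)
    (hhess : NegDefHess (d2R R) σ₀ α₀) :
    ∀ G : ℝ × ℝ × ℝ → ℝ, IsBurgersSol R G →
      ∀ τ ∈ Set.Ioo (0 : ℝ) (mOf R)⁻¹,
        (sSup (Set.range fun p : ℝ × ℝ => pd 0 (pd 0 G) (p.1, p.2, τ)) =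
          mOf R / (1 - τ * mOf R)) ∧
        (∀ σ α : ℝ,
          pd 0 (pd 0 G) (σ, α, τ) = mOf R / (1 - τ * mOf R) ↔
            (σ = σ₀ - τ * deriv (fun σ' => R σ' α₀) σ₀ ∧
              ∃ k : ℤ, α = α₀ + 2 * Real.pi * k)) ∧
        (∀ k : ℤ,
          NegDefHess (fun σ α => pd 0 (pd 0 G) (σ, α, τ))
            (σ₀ - τ * deriv (fun σ' => R σ' α₀) σ₀) (α₀ + 2 * Real.pi * k)) :=
  fun _ hG _ hτ => burgers_max_propagation_general
    (contDiff_infty.1 hsm 4) hper hbdd hmax honly hhess hG (Ioo_subset_Ico_self hτ)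

end
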